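/- Let n ≥ 1 and let k₁,…,kₙ be positive integers; let ρ(z,w) = ∏_{j=1}^n (1 − z_j w_j)^{k_j}, regarded as a polynomial in the 2n+1 variables z₁,…,zₙ, w₁,…,wₙ, η (not involving η). Let a be a nonconstant polynomial in z₁,…,zₙ alone. If a polynomial b in the variables w₁,…,wₙ, η alone divides h(z,w,η) := ρ(z,w) − a(z)·η in ℂ[z₁,…,zₙ, w₁,…,wₙ, η], then b is constant. -/

import Mathlib

noncomputable section

open MvPolynomial

/-- The complexified generic norm `ρ(z,w) = ∏_j (1 − z_j w_j)^{k_j}` of the polydisc, as a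
polynomial in the `2n+1` variables `z₁,…,zₙ, w₁,…,wₙ, η` (not involving `η`): the `z`
variables are indexed by `Sum.inl j`, the `w` variables by `Sum.inr (Sum.inl j)`, and `η`
by `Sum.inr (Sum.inr ())`. -/
def rhoPoly (n : ℕ) (k : Fin n → ℕ) : MvPolynomial (Fin n ⊕ (Fin n ⊕ Unit)) ℂ :=
  ∏ j, (1 - X (Sum.inl j) * X (Sum.inr (Sum.inl j))) ^ (k j)

/-- Over a domain, every variable of a divisor of a nonzero polynomial occurs in that polynomial. -/
theorem MvPolynomial.vars_subset_of_dvd {σ R : Type*} [CommRing R] [IsDomain R]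
    {p q : MvPolynomial σ R} (hq : q ≠ 0) (h : p ∣ q) : p.vars ⊆ q.vars := by
  classical
  obtain ⟨r, rfl⟩ := h
  rw [vars_def, vars_def, degrees_mul_eq (left_ne_zero_of_mul hq) (right_ne_zero_of_mul hq)]
  exact Multiset.toFinset_subset.mpr (Multiset.subset_of_le (Multiset.le_add_right _ _))

/-- A nonconstant polynomial over an infinite domain takes a value other than its value at `0`. -/
theorem MvPolynomial.exists_eval_ne_eval_zero {σ R : Type*} [CommRing R] [IsDomain R] [Infinite R]
    {p : MvPolynomial σ R} (hp : ¬ ∃ c, p = C c) : ∃ x, eval x p ≠ eval 0 p := by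
  by_contra! h
  exact hp ⟨eval 0 p, MvPolynomial.funext fun x => by rw [h x, eval_C]⟩

/-- The polynomial `ρ(z,w)` in the variables `(w,η)` at a fixed point `z`. -/
def rhoPolyAt {n : ℕ} (k : Fin n → ℕ) (z : Fin n → ℂ) : MvPolynomial (Fin n ⊕ Unit) ℂ :=
  ∏ j, (1 - C (z j) * X (Sum.inl j)) ^ (k j)

theorem rhoPolyAt_mem_supported {n : ℕ} (k : Fin n → ℕ) (z : Fin n → ℂ) :
    rhoPolyAt k z ∈ supported ℂ (Set.range (Sum.inl : Fin n → Fin n ⊕ Unit)) :=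
  prod_mem fun j _ => pow_mem (sub_mem (one_mem _)
    (mul_mem (Subalgebra.algebraMap_mem _ (z j)) (X_mem_supported.mpr (Set.mem_range_self j)))) _

theorem rhoPolyAt_zero {n : ℕ} (k : Fin n → ℕ) : rhoPolyAt k 0 = 1 := by
  simp [rhoPolyAt]

theorem eval_zero_rhoPolyAt {n : ℕ} (k : Fin n → ℕ) (z : Fin n → ℂ) :
    eval 0 (rhoPolyAt k z) = 1 := by
  simp [rhoPolyAt]

/-- Divisibility by a polynomial in `(w,η)` survives the specialization of `z` to a point. -/
theorem dvd_rhoPolyAt_sub {n : ℕ} {k : Fin n → ℕ} {a : MvPolynomial (Fin n) ℂ}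
    {b : MvPolynomial (Fin n ⊕ Unit) ℂ}
    (h : rename Sum.inr b ∣ rhoPoly n k - rename Sum.inl a * X (Sum.inr (Sum.inr ())))
    (z : Fin n → ℂ) : b ∣ rhoPolyAt k z - C (eval z a) * X (Sum.inr ()) := by
  have h' := map_dvd (aeval (Sum.elim (fun j => C (z j)) X) :
    MvPolynomial (Fin n ⊕ (Fin n ⊕ Unit)) ℂ →ₐ[ℂ] MvPolynomial (Fin n ⊕ Unit) ℂ) h
  have ha : aeval (fun j => (C (z j) : MvPolynomial (Fin n ⊕ Unit) ℂ)) a = C (eval z a) := by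
    simpa [Function.comp_def, MvPolynomial.algebraMap_eq] using
      aeval_algebraMap_apply (MvPolynomial (Fin n ⊕ Unit) ℂ) z a
  rw [map_sub, map_mul, aeval_rename, aeval_rename, Sum.elim_comp_inl, Sum.elim_comp_inr, ha,
    aeval_X_left_apply] at h'
  simpa [rhoPoly, rhoPolyAt] using h'

/-- The key algebraic claim in the proof of Lemma 3.3 of the paper, specialized to the
polydisc: if `a(z)` is a nonconstant polynomial in `z` alone and a polynomial `b(w,η)` in
`(w,η)` alone divides `ρ(z,w) − a(z)·η`, then `b` is constant. -/
theorem no_nonconstant_factor_in_w_eta (n : ℕ) (hn : 1 ≤ n)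
    (k : Fin n → ℕ) (hk : ∀ j, 0 < k j)
    (a : MvPolynomial (Fin n) ℂ) (ha : ¬ ∃ c : ℂ, a = MvPolynomial.C c)
    (b : MvPolynomial (Fin n ⊕ Unit) ℂ)
    (hdvd : (MvPolynomial.rename Sum.inr b) ∣
      (rhoPoly n k -
        (MvPolynomial.rename Sum.inl a) * X (Sum.inr (Sum.inr ())))) :
    ∃ c : ℂ, b = MvPolynomial.C c := by
  obtain ⟨z, hz⟩ := exists_eval_ne_eval_zero ha
  have h₀ := dvd_rhoPolyAt_sub hdvd 0
  have h₁ : b ∣ C (eval 0 a) * rhoPolyAt k z - C (eval z a) := by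
    have h := dvd_sub (dvd_mul_of_dvd_right (dvd_rhoPolyAt_sub hdvd z) (C (eval 0 a)))
      (dvd_mul_of_dvd_right h₀ (C (eval z a)))
    convert h using 1
    rw [rhoPolyAt_zero]
    ring
  have hne₀ : rhoPolyAt k 0 - C (eval 0 a) * X (Sum.inr ()) ≠ 0 := fun h => by
    simpa [rhoPolyAt_zero] using congrArg (eval 0) h
  have hne₁ : C (eval 0 a) * rhoPolyAt k z - C (eval z a) ≠ 0 := fun h => by
    have h' := congrArg (eval 0) h
    simp only [map_sub, map_mul, eval_C, eval_zero_rhoPolyAt, mul_one, map_zero] at h'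
    exact hz (sub_eq_zero.mp h').symm
  have hs₀ : rhoPolyAt k 0 - C (eval 0 a) * X (Sum.inr ()) ∈
      supported ℂ (Set.range (Sum.inr : Unit → Fin n ⊕ Unit)) := by
    rw [rhoPolyAt_zero]
    exact sub_mem (one_mem _)
      (mul_mem (Subalgebra.algebraMap_mem _ _) (X_mem_supported.mpr (Set.mem_range_self ())))
  have hs₁ : C (eval 0 a) * rhoPolyAt k z - C (eval z a) ∈
      supported ℂ (Set.range (Sum.inl : Fin n → Fin n ⊕ Unit)) :=
    sub_mem (mul_mem (Subalgebra.algebraMap_mem _ _) (rhoPolyAt_mem_supported k z))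
      (Subalgebra.algebraMap_mem _ _)
  refine ⟨_, vars_eq_empty_iff_eq_C.mp (Finset.eq_empty_of_forall_notMem fun i hi => ?_)⟩
  obtain ⟨u, rfl⟩ := mem_supported.mp hs₀ (vars_subset_of_dvd hne₀ h₀ hi)
  obtain ⟨j, hj⟩ := mem_supported.mp hs₁ (vars_subset_of_dvd hne₁ h₁ hi)
  exact Sum.inl_ne_inr hj
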